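/- Let G be a controllable graph on n vertices whose walk matrix W satisfies: det(W)/2^⌊n/2⌋ is an odd square-free integer (in particular 2^⌊n/2⌋ divides det(W) and 2^{⌊n/2⌋+1} does not). Let Q be a rational orthogonal matrix with Qe = e such that QᵀA(G)Q is a symmetric (0,1)-matrix with zero diagonal, and let ℓ be the level of Q. Then ℓ = 1 or ℓ = 2. -/

import Mathlib

open Matrix

open scoped Classical in
/-- The (0,1)-adjacency matrix of a simple graph on `Fin n`, with entries in `R`. -/
noncomputable def adjMat {n : ℕ} (R : Type*) [Zero R] [One R] (G : SimpleGraph (Fin n)) :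
    Matrix (Fin n) (Fin n) R :=
  Matrix.of fun i j => if G.Adj i j then 1 else 0

/-- The walk matrix `W = [e, Ae, A²e, …, A^{n−1}e]` of a square matrix `A`,
where `e` is the all-ones vector: the `j`-th column is `A^j e`. -/
noncomputable def walkMatrix {R : Type*} [CommRing R] {n : ℕ} (A : Matrix (Fin n) (Fin n) R) :
    Matrix (Fin n) (Fin n) R :=
  Matrix.of fun i j => (A ^ (j : ℕ) *ᵥ fun _ => 1) i

/-!
Let `e` be the all-ones vector, `A` the adjacency matrix and `B = QᵀAQ`. Since `Qᵀ` fixes `e`, it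
carries the walk matrix of `A` to that of `B`; hence the level `ℓ` divides every integer that
annihilates the cokernel of `W`. Modulo two the form `x ↦ xᵀAx` vanishes, so almost every entry of
`WᵀW` is even, and `det W = 2 ^ ⌊n/2⌋ * b` makes `2 * b ^ 2` such an integer.

It remains to exclude a prime `p` dividing both `ℓ` and `b`. A column `u` of `ℓQ` satisfies
`uᵀW ≡ 0` modulo `p`, and `uᵀu ≡ uᵀAu ≡ 0` modulo `p ^ 2`. As `p` divides `det W` only once, the
left and right kernels of `W` modulo `p` are lines. If `u` did not vanish modulo `p`, it would be an
eigenvector of `A` in the column space of `W`, and both the kernel of `W` and a preimage of `u`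
would be eigenvectors of the companion matrix of `A` for the same eigenvalue. Such eigenspaces are
lines, a contradiction; so `p` divides every entry of `ℓQ`, against the minimality of `ℓ`.
-/

section Divisibility

variable {R ι κ : Type*} [CommSemiring R] [Fintype κ] {p : R} {x : κ → R}

theorem dvd_mulVec (M : Matrix ι κ R) (hx : ∀ j, p ∣ x j) (i : ι) : p ∣ (M *ᵥ x) i :=
  Finset.dvd_sum fun j _ => (hx j).mul_left _

theorem dvd_vecMul (hx : ∀ j, p ∣ x j) (M : Matrix κ ι R) (i : ι) : p ∣ (x ᵥ* M) i :=
  Finset.dvd_sum fun j _ => (hx j).mul_right _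

end Divisibility

section PrimeExactlyOnce

variable {R : Type*} [CommRing R] {ι : Type*} [Fintype ι] [DecidableEq ι] {W : Matrix ι ι R}
  {p d : R} {u : ι → R} {i : ι}

theorem det_updateRow_vecMul (W : Matrix ι ι R) (i : ι) (u : ι → R) :
    (W.updateRow i (u ᵥ* W)).det = u i * W.det := by
  rw [vecMul_eq_sum, det_updateRow_sum, smul_eq_mul]

theorem vecMul_updateRow_of_eq_zero (W : Matrix ι ι R) (y : ι → R) (hi : u i = 0) :
    u ᵥ* W.updateRow i y = u ᵥ* W := by
  ext k
  refine Finset.sum_congr rfl fun j _ => ?_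
  obtain rfl | hj := eq_or_ne j i
  · rw [hi, zero_mul, zero_mul]
  · exact congrArg (fun r : ι → R => u j * r k) (updateRow_ne hj)

theorem dvd_of_dvd_vecMul (hp : Prime p) (hdet : ¬ p ∣ W.det) (hu : ∀ j, p ∣ (u ᵥ* W) j) (j : ι) :
    p ∣ u j := by
  have hadj : ((u ᵥ* W) ᵥ* W.adjugate) j = W.det * u j := by
    rw [vecMul_vecMul, mul_adjugate, vecMul_smul, vecMul_one, Pi.smul_apply, smul_eq_mul]
  have hdvd : p ∣ W.det * u j := hadj ▸ dvd_vecMul hu _ _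
  exact (hp.dvd_or_dvd hdvd).resolve_left hdet

theorem exists_dvd_mulVec_of_dvd_det (hp : Prime p) (hdet : p ∣ W.det) :
    ∃ g : ι → R, (∀ i, p ∣ (W *ᵥ g) i) ∧ ∃ i, ¬ p ∣ g i := by
  have : (Ideal.span {p}).IsPrime := (Ideal.span_singleton_prime hp.ne_zero).2 hp
  set π := Ideal.Quotient.mk (Ideal.span {p})
  have hker : ∀ x, π x = 0 ↔ p ∣ x := fun x => Ideal.Quotient.eq_zero_iff_dvd p x
  obtain ⟨v, hv, hWv⟩ : ∃ v ≠ 0, W.map π *ᵥ v = 0 := by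
    rw [exists_mulVec_eq_zero_iff, ← π.mapMatrix_apply, ← π.map_det, hker]
    exact hdet
  obtain ⟨g, rfl⟩ := Ideal.Quotient.mk_surjective.comp_left v
  refine ⟨g, fun i => ?_, ?_⟩
  · rw [← hker, π.map_mulVec]
    exact congrFun hWv i
  · obtain ⟨i, hi⟩ := Function.ne_iff.1 hv
    exact ⟨i, fun h => hi ((hker _).2 h)⟩

variable [IsDomain R]

-- Modulo `p` the matrix `W` has corank one: replacing row `i` of `W` by `(u ᵥ* W) / p` gives a
-- matrix that is invertible modulo `p`, and it still kills the combination of `u` and `v` whose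
-- `i`-th entry is zero.
theorem dvd_mul_sub_mul_of_dvd_vecMul {v : ι → R} (hp : Prime p) (hdet : W.det = p * d)
    (hd : ¬ p ∣ d) (hu : ∀ j, p ∣ (u ᵥ* W) j) (hi : ¬ p ∣ u i) (hv : ∀ j, p ∣ (v ᵥ* W) j) (j : ι) :
    p ∣ u i * v j - v i * u j := by
  choose y hy using hu
  have hdetM : (W.updateRow i y).det = u i * d := by
    apply mul_left_cancel₀ hp.ne_zero
    have hrow : u ᵥ* W = p • y := funext hy
    rw [← det_updateRow_smul, ← hrow, det_updateRow_vecMul, hdet, mul_left_comm]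
  have hM : ¬ p ∣ (W.updateRow i y).det := hdetM ▸ fun h => (hp.dvd_or_dvd h).elim hi hd
  refine dvd_of_dvd_vecMul (u := u i • v - v i • u) hp hM (fun k => ?_) j
  rw [vecMul_updateRow_of_eq_zero _ _ (by simp [mul_comm]), sub_vecMul, smul_vecMul, smul_vecMul]
  exact dvd_sub ((hv k).mul_left _) ((Dvd.intro _ (hy k).symm).mul_left _)

theorem exists_mulVec_eq_smul_of_dvd_dotProduct (hp : Prime p) (hdet : W.det = p * d)
    (hd : ¬ p ∣ d) (hu : ∀ j, p ∣ (u ᵥ* W) j) (hi : ¬ p ∣ u i) {x : ι → R} (hx : p ∣ u ⬝ᵥ x) :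
    ∃ h, W *ᵥ h = d • x := by
  have hadj : ∀ k, p ∣ (W.adjugate *ᵥ x) k := by
    intro k
    have hrow : ∀ j, p ∣ (W.adjugate.row k ᵥ* W) j := fun j => by
      change p ∣ (W.adjugate * W) k j
      rw [adjugate_mul, hdet, Matrix.smul_apply, smul_eq_mul, mul_assoc]
      exact dvd_mul_right _ _
    have hcross := dvd_mul_sub_mul_of_dvd_vecMul hp hdet hd hu hi hrow
    have hsum : u i * (W.adjugate *ᵥ x) k =
        (u i • W.adjugate.row k - W.adjugate k i • u) ⬝ᵥ x + W.adjugate k i * (u ⬝ᵥ x) := by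
      rw [sub_dotProduct, smul_dotProduct, smul_dotProduct, smul_eq_mul, smul_eq_mul,
        sub_add_cancel]
      rfl
    have hdvd : p ∣ u i * (W.adjugate *ᵥ x) k :=
      hsum ▸ dvd_add (Finset.dvd_sum fun j _ => (hcross j).mul_right _) (hx.mul_left _)
    exact (hp.dvd_or_dvd hdvd).resolve_left hi
  choose h hh using hadj
  refine ⟨h, smul_right_injective _ hp.ne_zero ?_⟩
  have hph : W.adjugate *ᵥ x = p • h := funext hh
  change p • (W *ᵥ h) = p • (d • x)
  rw [← mulVec_smul, ← hph, mulVec_mulVec, mul_adjugate, smul_mulVec, one_mulVec, hdet, mul_smul]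

-- Modulo `p`, the vectors orthogonal to `u` form the column space of `W`. As `T` maps `W *ᵥ h` to
-- `p` times such a vector, `W` cancels from `W *ᵥ (S *ᵥ h) = T *ᵥ (W *ᵥ h)` and leaves `p`.
theorem dvd_mulVec_of_intertwine {T S : Matrix ι ι R} (hT : T.IsSymm) (hTW : T * W = W * S)
    (hp : Prime p) (hdet : W.det = p * d) (hd : ¬ p ∣ d) (hu : ∀ j, p ∣ (u ᵥ* W) j)
    (hi : ¬ p ∣ u i) {β : ι → R} (hTu : T *ᵥ u = p • β) (huβ : p ∣ u ⬝ᵥ β) {h w : ι → R} {t : R}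
    (hh : W *ᵥ h = t • u + p • w) (k : ι) : p ∣ (S *ᵥ h) k := by
  have hort : p ∣ u ⬝ᵥ (t • β + T *ᵥ w) := by
    have hsymm : u ⬝ᵥ T *ᵥ w = p * (w ⬝ᵥ β) := by
      rw [← dotProduct_transpose_mulVec, hT, hTu, dotProduct_smul, smul_eq_mul]
    rw [dotProduct_add, dotProduct_smul, hsymm]
    exact dvd_add (huβ.mul_left _) (dvd_mul_right _ _)
  obtain ⟨x, hx⟩ := exists_mulVec_eq_smul_of_dvd_dotProduct hp hdet hd hu hi hort
  have hW : W.det ≠ 0 := hdet ▸ mul_ne_zero hp.ne_zero fun h0 => hd (h0 ▸ dvd_zero p)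
  have hSh : d • (S *ᵥ h) = p • x := by
    apply mulVec_injective_of_det_ne_zero hW
    change W *ᵥ (d • (S *ᵥ h)) = W *ᵥ (p • x)
    rw [mulVec_smul, mulVec_mulVec, ← hTW, ← mulVec_mulVec, hh, mulVec_add, mulVec_smul,
      mulVec_smul, hTu, mulVec_smul, hx]
    module
  exact (hp.dvd_or_dvd (Dvd.intro _ (congrFun hSh k).symm)).resolve_left hd

end PrimeExactlyOnce

theorem dotProduct_pow_add_mulVec {R ι : Type*} [CommSemiring R] [Fintype ι] [DecidableEq ι]
    {A : Matrix ι ι R} (hA : A.IsSymm) (k l : ℕ) (x y : ι → R) :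
    x ⬝ᵥ A ^ (k + l) *ᵥ y = (A ^ k *ᵥ x) ⬝ᵥ A ^ l *ᵥ y := by
  rw [pow_add, ← mulVec_mulVec, dotProduct_mulVec, ← mulVec_transpose, hA.pow]

section WalkMatrix

variable {R : Type*} [CommRing R] {n m : ℕ}

theorem walkMatrix_apply (A : Matrix (Fin n) (Fin n) R) (i j : Fin n) :
    walkMatrix A i j = (A ^ (j : ℕ) *ᵥ 1) i :=
  rfl

theorem mul_walkMatrix_of_intertwine {P A B : Matrix (Fin n) (Fin n) R} {c : R}
    (hPA : P * A = B * P) (hP : P *ᵥ 1 = c • 1) : P * walkMatrix A = c • walkMatrix B := by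
  have hpow : ∀ k : ℕ, P * A ^ k = B ^ k * P := fun k => SemiconjBy.pow_right hPA k
  ext i j
  calc (P * walkMatrix A) i j = (P *ᵥ (A ^ (j : ℕ) *ᵥ 1)) i := rfl
    _ = (c • B ^ (j : ℕ) *ᵥ 1) i := by
      rw [mulVec_mulVec, hpow, ← mulVec_mulVec, hP, mulVec_smul]

theorem transpose_walkMatrix_mul_walkMatrix_apply {A : Matrix (Fin n) (Fin n) R} (hA : A.IsSymm)
    (i j : Fin n) :
    ((walkMatrix A)ᵀ * walkMatrix A) i j = 1 ⬝ᵥ A ^ (i + j : ℕ) *ᵥ 1 := by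
  rw [dotProduct_pow_add_mulVec hA]
  rfl

/-- A matrix over `R` that acts on all but the last vector of the standard basis by sending each
to the next one. The last column, which is arbitrary, holds the negated coefficients of the
corresponding monic polynomial. -/
def IsCompanion (C : Matrix (Fin (m + 1)) (Fin (m + 1)) R) : Prop :=
  ∀ (k : Fin m) i, C i k.castSucc = if i = k.succ then 1 else 0

theorem IsCompanion.mulVec_succ {C : Matrix (Fin (m + 1)) (Fin (m + 1)) R} (hC : IsCompanion C)
    (h : Fin (m + 1) → R) (k : Fin m) :
    (C *ᵥ h) k.succ = h k.castSucc + C k.succ (Fin.last m) * h (Fin.last m) := by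
  simp [mulVec, dotProduct, Fin.sum_univ_castSucc, hC _ k.succ]

theorem IsCompanion.dvd_of_dvd_mulVec {C : Matrix (Fin (m + 1)) (Fin (m + 1)) R}
    (hC : IsCompanion C) {p a c : R} (hp : Prime p) (ha : ¬ p ∣ a) {h : Fin (m + 1) → R}
    (hh : ∀ i, p ∣ ((a • C - c • 1) *ᵥ h) i) (hlast : p ∣ h (Fin.last m)) (i : Fin (m + 1)) :
    p ∣ h i := by
  induction i using Fin.reverseInduction with
  | last => exact hlast
  | cast k ih =>
    have hsucc := hh k.succ
    simp only [sub_mulVec, smul_mulVec, one_mulVec, Pi.sub_apply, Pi.smul_apply, smul_eq_mul,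
      hC.mulVec_succ, mul_add] at hsucc
    rw [dvd_sub_left (ih.mul_left c), dvd_add_left ((hlast.mul_left _).mul_left a)] at hsucc
    exact (hp.dvd_or_dvd hsucc).resolve_left ha

theorem IsCompanion.dvd_mul_sub_mul {C : Matrix (Fin (m + 1)) (Fin (m + 1)) R}
    (hC : IsCompanion C) {p a c : R} (hp : Prime p) (ha : ¬ p ∣ a) {g h : Fin (m + 1) → R}
    (hg : ∀ i, p ∣ ((a • C - c • 1) *ᵥ g) i) (hh : ∀ i, p ∣ ((a • C - c • 1) *ᵥ h) i)
    (i : Fin (m + 1)) : p ∣ g (Fin.last m) * h i - h (Fin.last m) * g i := by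
  refine hC.dvd_of_dvd_mulVec (c := c) (h := g (Fin.last m) • h - h (Fin.last m) • g) hp ha
    (fun k => ?_) (by simp [mul_comm]) i
  rw [mulVec_sub, mulVec_smul, mulVec_smul]
  exact dvd_sub ((hh k).mul_left _) ((hg k).mul_left _)

theorem pow_card_eq_neg_sum_charpoly [Nontrivial R] (A : Matrix (Fin n) (Fin n) R) :
    A ^ n = ∑ k : Fin n, -A.charpoly.coeff k • A ^ (k : ℕ) := by
  have hdeg : A.charpoly.natDegree = n := by rw [charpoly_natDegree_eq_dim, Fintype.card_fin]
  have hlead : A.charpoly.coeff n = 1 := by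
    simpa only [hdeg] using A.charpoly_monic.coeff_natDegree
  have haeval := aeval_self_charpoly A
  rw [Polynomial.aeval_eq_sum_range, hdeg, Finset.sum_range_succ, hlead, one_smul,
    Finset.sum_range] at haeval
  simp only [neg_smul, Finset.sum_neg_distrib]
  exact (neg_eq_of_add_eq_zero_right haeval).symm

theorem exists_isCompanion_mul_walkMatrix_eq [Nontrivial R]
    (A : Matrix (Fin (m + 1)) (Fin (m + 1)) R) :
    ∃ C, IsCompanion C ∧ A * walkMatrix A = walkMatrix A * C := by
  refine ⟨of fun i j => Fin.lastCases (motive := fun _ => R) (-A.charpoly.coeff i)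
    (fun k => if i = k.succ then 1 else 0) j, fun k i => by simp, ?_⟩
  ext i j
  have hmul : (A * walkMatrix A) i j = (A ^ ((j : ℕ) + 1) *ᵥ 1) i := by
    rw [pow_succ', ← mulVec_mulVec]
    rfl
  rw [hmul]
  induction j using Fin.lastCases with
  | last =>
    simp only [Fin.val_last, pow_card_eq_neg_sum_charpoly A, sum_mulVec, Finset.sum_apply,
      mul_apply, of_apply, Fin.lastCases_last, walkMatrix_apply, smul_mulVec, Pi.smul_apply,
      smul_eq_mul, mul_comm]
  | cast k => simp [mul_apply, walkMatrix_apply]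

-- Otherwise a lift `h` of `u` along `W` and a vector `g` killed by `W` modulo `p` are eigenvectors
-- of `C` modulo `p` for the same eigenvalue `c / a`. Companion matrices have one-dimensional
-- eigenspaces, so `u` would be a multiple of `W *ᵥ g`.
theorem IsCompanion.dvd_of_intertwine [IsDomain R] {W T C : Matrix (Fin (m + 1)) (Fin (m + 1)) R}
    (hC : IsCompanion C) {p a c d : R} (hT : T.IsSymm) (hTW : T * W = W * (a • C - c • 1))
    (hp : Prime p) (ha : ¬ p ∣ a) (hdet : W.det = p * d) (hd : ¬ p ∣ d) {u β : Fin (m + 1) → R}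
    (hu : ∀ j, p ∣ (u ᵥ* W) j) (huu : p ∣ u ⬝ᵥ u) (hTu : T *ᵥ u = p • β) (huβ : p ∣ u ⬝ᵥ β)
    (i : Fin (m + 1)) : p ∣ u i := by
  by_contra hi
  obtain ⟨h, hWh⟩ := exists_mulVec_eq_smul_of_dvd_dotProduct hp hdet hd hu hi huu
  obtain ⟨g, hWg, k, hgk⟩ := exists_dvd_mulVec_of_dvd_det hp (Dvd.intro _ hdet.symm)
  have hh : ∀ j, p ∣ ((a • C - c • 1) *ᵥ h) j :=
    dvd_mulVec_of_intertwine hT hTW hp hdet hd hu hi hTu huβ (t := d) (w := 0) (by simp [hWh])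
  have hg : ∀ j, p ∣ ((a • C - c • 1) *ᵥ g) j := by
    choose w hw using hWg
    exact dvd_mulVec_of_intertwine hT hTW hp hdet hd hu hi hTu huβ (t := 0) (w := w)
      ((funext hw).trans (by simp [Pi.smul_def]))
  have hlast : ¬ p ∣ g (Fin.last m) := fun hg0 => hgk (hC.dvd_of_dvd_mulVec hp ha hg hg0 k)
  have hdvd : p ∣ g (Fin.last m) * (d * u i) := by
    have hcross := dvd_mulVec (x := g (Fin.last m) • h - h (Fin.last m) • g) W
      (hC.dvd_mul_sub_mul hp ha hg hh) i
    rw [mulVec_sub, mulVec_smul, mulVec_smul, hWh] at hcross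
    exact (dvd_sub_left ((hWg i).mul_left _)).1 hcross
  exact (hp.dvd_or_dvd hdvd).elim hlast fun hdu => (hp.dvd_or_dvd hdu).elim hd hi

theorem dvd_of_dvd_vecMul_walkMatrix [IsDomain R] {A : Matrix (Fin n) (Fin n) R} (hA : A.IsSymm)
    {p d : R} (hp : Prime p) (hdet : (walkMatrix A).det = p * d) (hd : ¬ p ∣ d) {u : Fin n → R}
    (hu : ∀ j, p ∣ (u ᵥ* walkMatrix A) j) (huu : p ^ 2 ∣ u ⬝ᵥ u) (huA : p ^ 2 ∣ u ⬝ᵥ A *ᵥ u)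
    (i : Fin n) : p ∣ u i := by
  by_contra hi
  obtain _ | m := n
  · exact i.elim0
  obtain ⟨C, hC, hAW⟩ := exists_isCompanion_mul_walkMatrix_eq A
  set T := u i • A - (A *ᵥ u) i • (1 : Matrix _ _ R) with hTdef
  have hT : T.IsSymm := (hA.smul _).sub (isSymm_one.smul _)
  have hTW : T * walkMatrix A = walkMatrix A * (u i • C - (A *ᵥ u) i • 1) := by
    simp only [hTdef, Matrix.sub_mul, Matrix.mul_sub, Matrix.smul_mul, Matrix.mul_smul,
      Matrix.one_mul, Matrix.mul_one, hAW]
  have hTu_apply : T *ᵥ u = u i • (A *ᵥ u) - (A *ᵥ u) i • u := by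
    rw [sub_mulVec, smul_mulVec, smul_mulVec, one_mulVec]
  -- The row `u ᵥ* A` is killed by the walk matrix modulo `p` as well, so it is proportional to `u`.
  obtain ⟨β, hTu⟩ : ∃ β, T *ᵥ u = p • β := by
    have hAu : ∀ j, p ∣ ((A *ᵥ u) ᵥ* walkMatrix A) j := fun j => by
      rw [← vecMul_transpose, hA, vecMul_vecMul, hAW, ← vecMul_vecMul]
      exact dvd_vecMul hu C j
    choose β hβ using dvd_mul_sub_mul_of_dvd_vecMul hp hdet hd hu hi hAu
    exact ⟨β, hTu_apply.trans (funext hβ)⟩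
  have huβ : p ∣ u ⬝ᵥ β := by
    have huTu : p ^ 2 ∣ u ⬝ᵥ T *ᵥ u := by
      rw [hTu_apply, dotProduct_sub, dotProduct_smul, dotProduct_smul]
      exact dvd_sub (huA.mul_left _) (huu.mul_left _)
    rw [hTu, dotProduct_smul, smul_eq_mul, sq] at huTu
    exact (mul_dvd_mul_iff_left hp.ne_zero).1 huTu
  exact hi (hC.dvd_of_intertwine hT hTW hp hi hdet hd hu ((dvd_pow_self p two_ne_zero).trans huu)
    hTu huβ i)

end WalkMatrix

section CharTwo

variable {R ι : Type*} [CommRing R] [CharP R 2] [Fintype ι] {A : Matrix ι ι R}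

theorem dotProduct_mulVec_self_eq_zero (hA : A.IsSymm) (hdiag : ∀ i, A i i = 0) (x : ι → R) :
    x ⬝ᵥ A *ᵥ x = 0 := by
  have hsum : x ⬝ᵥ A *ᵥ x = ∑ q : ι × ι, x q.1 * (A q.1 q.2 * x q.2) := by
    simp only [dotProduct, mulVec, Finset.mul_sum, Fintype.sum_prod_type]
  rw [hsum]
  refine Finset.sum_involution (fun q _ => q.swap) (fun q _ => ?_) (fun q _ hq hswap => hq ?_)
    (fun _ _ => Finset.mem_univ _) fun q _ => q.swap_swap
  · rw [Prod.fst_swap, Prod.snd_swap, hA.apply, mul_comm (x q.2), mul_assoc, mul_left_comm]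
    exact CharTwo.add_self_eq_zero _
  · have hq12 : q.2 = q.1 := congrArg Prod.fst hswap
    rw [hq12, hdiag, zero_mul, mul_zero]

theorem one_dotProduct_pow_mulVec_one_eq_zero [DecidableEq ι] (hA : A.IsSymm)
    (hdiag : ∀ i, A i i = 0) {k : ℕ} (hk : k ≠ 0) : (1 : ι → R) ⬝ᵥ A ^ k *ᵥ 1 = 0 := by
  induction k using Nat.strong_induction_on with
  | h k ih =>
    obtain ⟨r, rfl | rfl⟩ := k.even_or_odd'
    · have hsq : (1 : ι → R) ⬝ᵥ A ^ (2 * r) *ᵥ 1 = (1 ⬝ᵥ A ^ r *ᵥ 1) ^ 2 := by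
        rw [two_mul, dotProduct_pow_add_mulVec hA, one_dotProduct, CharTwo.sum_sq]
        simp only [dotProduct, sq]
      rw [hsq, ih r (by lia) (by lia), zero_pow two_ne_zero]
    · have hodd : (1 : ι → R) ⬝ᵥ A ^ (2 * r + 1) *ᵥ 1 = (A ^ r *ᵥ 1) ⬝ᵥ A *ᵥ (A ^ r *ᵥ 1) := by
        rw [two_mul, add_assoc, dotProduct_pow_add_mulVec hA, pow_succ', ← mulVec_mulVec]
      rw [hodd, dotProduct_mulVec_self_eq_zero hA hdiag]

end CharTwo

theorem even_one_dotProduct_pow_mulVec_one {ι : Type*} [Fintype ι] [DecidableEq ι]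
    {A : Matrix ι ι ℤ} (hA : A.IsSymm) (hdiag : ∀ i, Even (A i i)) {k : ℕ} (hk : k ≠ 0) :
    Even (1 ⬝ᵥ A ^ k *ᵥ 1) := by
  rw [even_iff_two_dvd, ← Nat.cast_ofNat, ← ZMod.intCast_zmod_eq_zero_iff_dvd]
  set π := Int.castRingHom (ZMod 2)
  have hpow : (A ^ k).map π = A.map π ^ k := map_pow π.mapMatrix A k
  have hone : π ∘ (1 : ι → ℤ) = 1 := funext fun _ => map_one π
  have hred : π (1 ⬝ᵥ A ^ k *ᵥ 1) = 1 ⬝ᵥ A.map π ^ k *ᵥ 1 := by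
    rw [RingHom.map_dotProduct, hone, ← hpow, ← hone]
    exact congrArg (_ ⬝ᵥ ·) (funext fun i => π.map_mulVec _ _ i)
  exact hred.trans (one_dotProduct_pow_mulVec_one_eq_zero (hA.map π)
    (fun i => (ZMod.intCast_zmod_eq_zero_iff_dvd _ 2).2 (hdiag i).two_dvd) hk)

theorem mul_eq_smul_one_comm {R ι : Type*} [CommRing R] [IsDomain R] [Fintype ι] [DecidableEq ι]
    {M N : Matrix ι ι R} {c : R} (hM : M.det ≠ 0) (h : N * M = c • 1) : M * N = c • 1 := by
  have hreg : IsRegular M := isRegular_of_isLeftRegular_det (IsRegular.of_ne_zero hM).left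
  apply hreg.right
  change M * N * M = c • 1 * M
  rw [Matrix.mul_assoc, h, Matrix.mul_smul, Matrix.smul_mul, Matrix.mul_one, Matrix.one_mul]

section Cokernel

variable {n : ℕ} {A : Matrix (Fin n) (Fin n) ℤ}

-- Every entry of the Gram matrix except possibly the `(0, 0)` entry, which is `n`, is even.
theorem exists_mul_transpose_walkMatrix_mul_walkMatrix_eq (hA : A.IsSymm)
    (hdiag : ∀ i, Even (A i i)) :
    ∃ D M : Matrix (Fin n) (Fin n) ℤ,
      D * ((walkMatrix A)ᵀ * walkMatrix A) = (2 : ℤ) • M ∧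
        D.det * 2 ^ (2 * (n / 2)) = 2 ^ n := by
  have hgram : ∀ i j : Fin n, i.val + j.val ≠ 0 →
      2 ∣ ((walkMatrix A)ᵀ * walkMatrix A) i j := fun i j hij => by
    rw [transpose_walkMatrix_mul_walkMatrix_apply hA]
    exact (even_one_dotProduct_pow_mulVec_one hA hdiag hij).two_dvd
  suffices ∃ δ : Fin n → ℤ, (∀ i j, 2 ∣ δ i * ((walkMatrix A)ᵀ * walkMatrix A) i j) ∧
      (∏ i, δ i) * 2 ^ (2 * (n / 2)) = 2 ^ n by
    obtain ⟨δ, hδ, hprod⟩ := this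
    choose M hM using hδ
    refine ⟨diagonal δ, of M, ?_, by rwa [det_diagonal]⟩
    ext i j
    rw [diagonal_mul, hM, Matrix.smul_apply, of_apply, smul_eq_mul]
  obtain ⟨m, rfl | rfl⟩ := n.even_or_odd'
  · refine ⟨1, fun i j => ?_, by simp⟩
    rw [Pi.one_apply, one_mul]
    by_cases hij : i.val + j.val = 0
    · rw [transpose_walkMatrix_mul_walkMatrix_apply hA, hij]
      simp
    · exact hgram i j hij
  · refine ⟨Fin.cons 2 1, fun i j => ?_, ?_⟩
    · cases i using Fin.cases with
      | zero => exact dvd_mul_right _ _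
      | succ i => exact (hgram i.succ j (by simp)).mul_left _
    · rw [show (2 * m + 1) / 2 = m by lia]
      simp [Fin.prod_univ_succ, pow_succ']

theorem exists_walkMatrix_mul_eq (hA : A.IsSymm) (hdiag : ∀ i, Even (A i i)) {b : ℤ}
    (hdet : (walkMatrix A).det = 2 ^ (n / 2) * b) (hb : b ≠ 0) :
    ∃ N, walkMatrix A * N = (2 * b ^ 2) • 1 := by
  obtain ⟨D, M, hM, hD⟩ := exists_mul_transpose_walkMatrix_mul_walkMatrix_eq hA hdiag
  have hMdet : M.det = b ^ 2 := by
    have hdets := congrArg det hM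
    rw [det_mul, det_mul, det_transpose, hdet, det_smul, Fintype.card_fin] at hdets
    apply mul_left_cancel₀ (pow_ne_zero n two_ne_zero)
    rw [← hdets, ← hD]
    ring
  refine ⟨M.adjugate * (D * (walkMatrix A)ᵀ), mul_eq_smul_one_comm (hdet ▸ by positivity) ?_⟩
  rw [Matrix.mul_assoc, Matrix.mul_assoc, hM, Matrix.mul_smul, adjugate_mul, hMdet, mul_smul]

end Cokernel

section Denominator

variable {m n : Type*} [Fintype m] [Fintype n] {Q : Matrix m n ℚ}

theorem den_mul_apply (Q : Matrix m n ℚ) (i : m) (j : n) : (Q.den : ℚ) * Q i j = Q.num i j := by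
  rw [← Q.num_div_den, mul_div_cancel₀ _ (Nat.cast_ne_zero.2 Q.den_ne_zero)]

theorem map_num_eq_den_smul (Q : Matrix m n ℚ) :
    Q.num.map (Int.cast : ℤ → ℚ) = (Q.den : ℚ) • Q :=
  ext fun i j => (den_mul_apply Q i j).symm

theorem intCast_den_dvd_iff {c : ℤ} :
    (Q.den : ℤ) ∣ c ↔ ∀ i j, ∃ z : ℤ, (c : ℚ) * Q i j = z := by
  constructor
  · rintro ⟨k, rfl⟩ i j
    exact ⟨k * Q.num i j, by push_cast; rw [← den_mul_apply]; ring⟩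
  · intro h
    rw [Int.natCast_dvd, den_dvd_iff]
    intro i j
    obtain ⟨z, hz⟩ := h i j
    obtain rfl | hc := eq_or_ne c 0
    · exact dvd_zero _
    · have hQ : Q i j = Rat.divInt z c := by
        rw [Rat.divInt_eq_div, eq_div_iff (Int.cast_ne_zero.2 hc), mul_comm, hz]
      rw [hQ, ← Int.natCast_dvd]
      exact Rat.den_dvd z c

theorem isLeast_den (Q : Matrix m n ℚ) :
    IsLeast {k : ℕ | 0 < k ∧ ∀ i j, ∃ z : ℤ, (k : ℚ) * Q i j = z} Q.den := by
  refine ⟨⟨Q.den_ne_zero.bot_lt, fun i j => ⟨_, den_mul_apply Q i j⟩⟩, fun k hk => ?_⟩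
  exact Nat.le_of_dvd hk.1 (Int.natCast_dvd_natCast.1 (intCast_den_dvd_iff.2 hk.2))

theorem den_dvd_of_dvd_mul_num {c : ℤ} (h : ∀ i j, (Q.den : ℤ) ∣ c * Q.num i j) :
    (Q.den : ℤ) ∣ c := by
  refine intCast_den_dvd_iff.2 fun i j => ?_
  obtain ⟨z, hz⟩ := h i j
  refine ⟨z, mul_left_cancel₀ (Nat.cast_ne_zero.2 Q.den_ne_zero) ?_⟩
  rw [mul_left_comm, den_mul_apply]
  exact_mod_cast hz

theorem not_dvd_den_of_dvd_num {p : ℤ} (hp : Prime p) (hnum : ∀ i j, p ∣ Q.num i j) :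
    ¬ p ∣ (Q.den : ℤ) := by
  rintro ⟨c, hc⟩
  have hdvd : (Q.den : ℤ) ∣ c :=
    den_dvd_of_dvd_mul_num fun i j => by
      rw [hc, mul_comm p]
      exact mul_dvd_mul_left c (hnum i j)
  have hc0 : c ≠ 0 := right_ne_zero_of_mul (hc ▸ Int.natCast_ne_zero.2 Q.den_ne_zero)
  rw [hc] at hdvd
  exact hp.not_dvd_one ((mul_dvd_mul_iff_right hc0).1 (by rwa [one_mul]))

end Denominator

section Intertwiner

variable {R : Type*} [CommRing R] {n : ℕ} {A B U : Matrix (Fin n) (Fin n) R} {l : R}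

theorem dvd_mul_of_walkMatrix_mul_eq (hUA : Uᵀ * A = B * Uᵀ) (hU1 : Uᵀ *ᵥ 1 = l • 1)
    {N : Matrix (Fin n) (Fin n) R} {c : R} (hN : walkMatrix A * N = c • 1) (i j : Fin n) :
    l ∣ c * U i j := by
  have hmul : c • Uᵀ = l • (walkMatrix B * N) := by
    rw [← Matrix.smul_mul, ← mul_walkMatrix_of_intertwine hUA hU1, Matrix.mul_assoc, hN,
      Matrix.mul_smul, Matrix.mul_one]
  exact Dvd.intro _ (congrFun₂ hmul j i).symm

theorem dvd_apply_of_transpose_mul_self_eq [IsDomain R] (hA : A.IsSymm)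
    (hUA : Uᵀ * A = B * Uᵀ) (hU1 : Uᵀ *ᵥ 1 = l • 1) (hUU : Uᵀ * U = l ^ 2 • 1) {p d : R}
    (hp : Prime p) (hdet : (walkMatrix A).det = p * d) (hd : ¬ p ∣ d) (hpl : p ∣ l)
    (i j : Fin n) : p ∣ U i j := by
  have hUW : Uᵀ * walkMatrix A = l • walkMatrix B := mul_walkMatrix_of_intertwine hUA hU1
  have hUAU : Uᵀ * (A * U) = l ^ 2 • B := by
    rw [← Matrix.mul_assoc, hUA, Matrix.mul_assoc, hUU, Matrix.mul_smul, Matrix.mul_one]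
  have hpl2 : p ^ 2 ∣ l ^ 2 := pow_dvd_pow_of_dvd hpl 2
  refine dvd_of_dvd_vecMul_walkMatrix hA hp hdet hd (u := U.col j) (fun k => ?_) ?_ ?_ i
  · exact hpl.trans (Dvd.intro _ (congrFun₂ hUW j k).symm)
  · exact hpl2.trans (Dvd.intro _ (congrFun₂ hUU j j).symm)
  · exact hpl2.trans (Dvd.intro _ (congrFun₂ hUAU j j).symm)

end Intertwiner

section RationalOrthogonal

variable {ι : Type*} [Fintype ι] [DecidableEq ι] {Q : Matrix ι ι ℚ}

theorem transpose_num_mul_num (hQ : Qᵀ * Q = 1) : Q.numᵀ * Q.num = (Q.den : ℤ) ^ 2 • 1 := by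
  apply map_injective (Int.cast_injective (α := ℚ))
  beta_reduce
  rw [map_mul_intCast, transpose_map, map_num_eq_den_smul, transpose_smul, Matrix.smul_mul,
    Matrix.mul_smul, hQ, map_smul' _ _ _ Int.cast_mul, smul_smul, ← sq,
    Matrix.map_one _ Int.cast_zero Int.cast_one]
  push_cast
  rfl

theorem transpose_num_mulVec_one (hQ : Qᵀ * Q = 1) (hQe : Q *ᵥ 1 = 1) :
    Q.numᵀ *ᵥ 1 = (Q.den : ℤ) • 1 := by
  have hQe' : Qᵀ *ᵥ 1 = 1 := by
    rw [← hQe, mulVec_mulVec, hQ, one_mulVec, hQe]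
  ext i
  apply Int.cast_injective (α := ℚ)
  calc (((Q.numᵀ *ᵥ 1) i : ℤ) : ℚ) = Q.den * (Qᵀ *ᵥ 1) i := by
        simp [mulVec, dotProduct, ← den_mul_apply, Finset.mul_sum]
    _ = (((Q.den : ℤ) • (1 : ι → ℤ)) i : ℤ) := by simp [hQe']

theorem transpose_num_mul (hQ : Qᵀ * Q = 1) {A B : Matrix ι ι ℤ}
    (hB : Qᵀ * A.map Int.cast * Q = B.map Int.cast) : Q.numᵀ * A = B * Q.numᵀ := by
  apply map_injective (Int.cast_injective (α := ℚ))
  beta_reduce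
  rw [map_mul_intCast, map_mul_intCast, ← hB, transpose_map, map_num_eq_den_smul, transpose_smul,
    Matrix.smul_mul, Matrix.mul_smul, Matrix.mul_assoc, Matrix.mul_assoc, mul_eq_one_comm.1 hQ,
    Matrix.mul_one]

end RationalOrthogonal

section Level

variable {n : ℕ} {A B : Matrix (Fin n) (Fin n) ℤ} {Q : Matrix (Fin n) (Fin n) ℚ}

theorem den_dvd_of_walkMatrix_mul_eq (hQ : Qᵀ * Q = 1) (hQe : Q *ᵥ 1 = 1)
    (hB : Qᵀ * A.map Int.cast * Q = B.map Int.cast) {N : Matrix (Fin n) (Fin n) ℤ} {c : ℤ}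
    (hN : walkMatrix A * N = c • 1) : (Q.den : ℤ) ∣ c :=
  den_dvd_of_dvd_mul_num <| dvd_mul_of_walkMatrix_mul_eq (transpose_num_mul hQ hB)
    (transpose_num_mulVec_one hQ hQe) hN

theorem not_dvd_den_of_det_walkMatrix_eq (hA : A.IsSymm) (hQ : Qᵀ * Q = 1) (hQe : Q *ᵥ 1 = 1)
    (hB : Qᵀ * A.map Int.cast * Q = B.map Int.cast) {p d : ℤ} (hp : Prime p)
    (hdet : (walkMatrix A).det = p * d) (hd : ¬ p ∣ d) : ¬ p ∣ (Q.den : ℤ) := fun hpQ =>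
  not_dvd_den_of_dvd_num hp
    (dvd_apply_of_transpose_mul_self_eq hA (transpose_num_mul hQ hB)
      (transpose_num_mulVec_one hQ hQe) (transpose_num_mul_num hQ) hp hdet hd hpQ) hpQ

theorem isCoprime_den_of_squarefree (hA : A.IsSymm) (hQ : Qᵀ * Q = 1) (hQe : Q *ᵥ 1 = 1)
    (hB : Qᵀ * A.map Int.cast * Q = B.map Int.cast) {k : ℕ} {b : ℤ}
    (hdet : (walkMatrix A).det = 2 ^ k * b) (hodd : Odd b) (hsf : Squarefree b) :
    IsCoprime (Q.den : ℤ) b := by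
  refine isCoprime_of_prime_dvd (fun h => hsf.ne_zero h.2) fun p hp hpQ hpb => ?_
  obtain ⟨c, rfl⟩ := hpb
  have hp2 : ¬ p ∣ 2 := fun h =>
    hp.not_isUnit ((Int.isCoprime_two_left.2 hodd).isUnit_of_dvd' h (dvd_mul_right p c))
  have hpc : ¬ p ∣ c := fun h => hp.not_isUnit (hsf p (mul_dvd_mul_left p h))
  refine not_dvd_den_of_det_walkMatrix_eq hA hQ hQe hB hp (d := 2 ^ k * c)
    (hdet.trans (mul_left_comm _ _ _)) (fun h => ?_) hpQ
  exact (hp.dvd_or_dvd h).elim (fun h2 => hp2 (hp.dvd_of_dvd_pow h2)) hpc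

end Level

section AdjMat

variable {n : ℕ} (R : Type*) (G : SimpleGraph (Fin n))

theorem isSymm_adjMat [Zero R] [One R] : (adjMat R G).IsSymm := by
  classical
  ext i j
  exact if_congr (G.adj_comm j i) rfl rfl

theorem adjMat_apply_self [Zero R] [One R] (i : Fin n) : adjMat R G i i = 0 :=
  if_neg G.irrefl

theorem map_intCast_adjMat [Ring R] : (adjMat ℤ G).map Int.cast = adjMat R G := by
  ext i j
  simp only [adjMat, map_apply, of_apply, Int.cast_ite, Int.cast_one, Int.cast_zero]

end AdjMat

theorem stmt_17_general {n : ℕ} {A : Matrix (Fin n) (Fin n) ℤ} (hA : A.IsSymm)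
    (hdiag : ∀ i, Even (A i i)) {b : ℤ} (hdet : (walkMatrix A).det = 2 ^ (n / 2) * b)
    (hodd : Odd b) (hsf : Squarefree b) {Q : Matrix (Fin n) (Fin n) ℚ} (hQ : Qᵀ * Q = 1)
    (hQe : Q *ᵥ 1 = 1)
    (hint : ∀ i j, ∃ z : ℤ, (Qᵀ * A.map (Int.cast : ℤ → ℚ) * Q) i j = z) {ℓ : ℕ}
    (hlevel : IsLeast {m : ℕ | 0 < m ∧ ∀ i j, ∃ z : ℤ, (m : ℚ) * Q i j = z} ℓ) :
    ℓ = 1 ∨ ℓ = 2 := by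
  obtain rfl : ℓ = Q.den := hlevel.unique (isLeast_den Q)
  choose B hB using hint
  have hB' : Qᵀ * A.map Int.cast * Q = (of B).map Int.cast := ext hB
  obtain ⟨N, hN⟩ := exists_walkMatrix_mul_eq hA hdiag hdet hsf.ne_zero
  have hdvd : (Q.den : ℤ) ∣ 2 * b ^ 2 := den_dvd_of_walkMatrix_mul_eq hQ hQe hB' hN
  have hcop : IsCoprime (Q.den : ℤ) b := isCoprime_den_of_squarefree hA hQ hQe hB' hdet hodd hsf
  have hdvd2 : (Q.den : ℤ) ∣ 2 := hcop.pow_right.dvd_of_dvd_mul_right hdvd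
  exact (Nat.dvd_prime Nat.prime_two).1 (by exact_mod_cast hdvd2)

/-- If `G` is a controllable graph with `det(W)/2^⌊n/2⌋` an odd
square-free integer, then the level `ℓ` of any `Q ∈ 𝒬_G` equals `1` or `2`. -/
theorem stmt_17 {n : ℕ} (G : SimpleGraph (Fin n))
    (A : Matrix (Fin n) (Fin n) ℚ) (hA : A = adjMat ℚ G)
    (W : Matrix (Fin n) (Fin n) ℤ) (hW : W = walkMatrix (adjMat ℤ G))
    (hctrl : W.det ≠ 0)
    (b : ℤ) (hb : W.det = 2 ^ (n / 2) * b) (hbodd : Odd b) (hbsf : Squarefree b)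
    (Q : Matrix (Fin n) (Fin n) ℚ)
    (hQorth : Qᵀ * Q = 1) (hQe : Q *ᵥ (fun _ => 1) = fun _ => 1)
    (hsymm : (Qᵀ * A * Q).IsSymm)
    (h01 : ∀ i j, (Qᵀ * A * Q) i j = 0 ∨ (Qᵀ * A * Q) i j = 1)
    (hdiag : ∀ i, (Qᵀ * A * Q) i i = 0)
    (ℓ : ℕ)
    (hlevel : IsLeast {m : ℕ | 0 < m ∧ ∀ i j, ∃ z : ℤ, (m : ℚ) * Q i j = (z : ℚ)} ℓ) :
    ℓ = 1 ∨ ℓ = 2 := by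
  subst hA hW
  rw [← map_intCast_adjMat ℚ G] at h01
  exact stmt_17_general (isSymm_adjMat ℤ G) (fun i => adjMat_apply_self ℤ G i ▸ Even.zero) hb hbodd
    hbsf hQorth hQe (fun i j => (h01 i j).elim (fun h => ⟨0, by simpa using h⟩)
      fun h => ⟨1, by simpa using h⟩) hlevel
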